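/- Let x : [0,1] → ℝ be a nonconstant continuous function that admits the Hurst roughness exponent H and for which ξ := lim_{n→∞} ξ_n exists. If ξ > 1/2 then H ≤ 1/2, and if ξ < 1/2 then H ≥ 1/2. -/

import Mathlib

/-! The parallelogram law, applied to the two half-increments of every dyadic interval, gives
`2 ^ n * V_n = V_0 + s_n ^ 2` for the quadratic variation `V_n`. Since `ξ_n` is the dyadic growth
exponent of `s_n`, comparing it with `1 / 2` compares `s_n ^ 2` with `2 ^ n`: infinitely many `n`
with `1 / 2 ≤ ξ_n` prevent `V_n` from tending to `0`, and infinitely many `n` with `ξ_n ≤ 1 / 2`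
prevent `V_n` from tending to infinity. -/

open Filter Finset

noncomputable section

/-- The `n`-th dyadic `p`-th variation of `x`. -/
def dyadicVar (x : ℝ → ℝ) (p : ℝ) (n : ℕ) : ℝ :=
  ∑ k ∈ Finset.range (2 ^ n), |x (((k : ℝ) + 1) / 2 ^ n) - x ((k : ℝ) / 2 ^ n)| ^ p

/-- `x` is nonconstant on `[0,1]`. -/
def Nonconstant (x : ℝ → ℝ) : Prop :=
  ∃ s ∈ Set.Icc (0 : ℝ) 1, ∃ t ∈ Set.Icc (0 : ℝ) 1, x s ≠ x t

/-- `x` admits the Hurst roughness exponent `H ∈ (0,1]`. -/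
def HasHurstExponent (x : ℝ → ℝ) (H : ℝ) : Prop :=
  0 < H ∧ H ≤ 1 ∧
  (∀ p : ℝ, 1 / H < p → Tendsto (dyadicVar x p) atTop (nhds 0)) ∧
  (∀ p : ℝ, 0 < p → p < 1 / H → Tendsto (dyadicVar x p) atTop atTop)

/-- Faber–Schauder coefficient `θ_{m,k}` of `x`. -/
def fsCoeff (x : ℝ → ℝ) (m k : ℕ) : ℝ :=
  2 ^ ((m : ℝ) / 2) *
    (2 * x ((2 * (k : ℝ) + 1) / 2 ^ (m + 1)) - x ((k : ℝ) / 2 ^ m) - x (((k : ℝ) + 1) / 2 ^ m))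

/-- `s_n = (∑_{m<n} ∑_{k<2^m} θ_{m,k}²)^{1/2}`. -/
def sSeq (x : ℝ → ℝ) (n : ℕ) : ℝ :=
  Real.sqrt (∑ m ∈ Finset.range n, ∑ k ∈ Finset.range (2 ^ m), fsCoeff x m k ^ 2)

/-- `ξ_n = (1/n) log₂ s_n`. -/
def xiSeq (x : ℝ → ℝ) (n : ℕ) : ℝ := Real.logb 2 (sSeq x n) / n

/-- A nondecreasing function `ϱ : ℕ → [1,∞)` is subexponential if `(1/n) log ϱ(n) → 0`. -/
def Subexponential (ϱ : ℕ → ℝ) : Prop :=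
  Monotone ϱ ∧ (∀ n, 1 ≤ ϱ n) ∧ Tendsto (fun n : ℕ => Real.log (ϱ n) / n) atTop (nhds 0)

/-- The quantity `2^{-(n-1)} ∑_{k<2^{n-1}} (∑_{m<n} 2^m θ²_{m,⌊2^{m-n+1}k⌋})^{p/2}`;
note that `⌊2^{m-n+1}k⌋ = k / 2^{n-1-m}` (natural number division). -/
def RJquantity (x : ℝ → ℝ) (p : ℝ) (n : ℕ) : ℝ :=
  (∑ k ∈ Finset.range (2 ^ (n - 1)),
      (∑ m ∈ Finset.range n, 2 ^ m * fsCoeff x m (k / 2 ^ (n - 1 - m)) ^ 2) ^ (p / 2)) /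
    2 ^ (n - 1)

/-- The reverse Jensen condition on the Faber–Schauder coefficients of `x`. -/
def ReverseJensen (x : ℝ → ℝ) : Prop :=
  ∀ p : ℝ, 1 ≤ p → ∃ np : ℕ, ∃ ϱ : ℕ → ℝ, Subexponential ϱ ∧
    ∀ n : ℕ, np ≤ n →
      (ϱ n)⁻¹ * sSeq x n ^ p ≤ RJquantity x p n ∧ RJquantity x p n ≤ ϱ n * sSeq x n ^ p

lemma sum_range_two_mul {M : Type*} [AddCommMonoid M] (f : ℕ → M) (n : ℕ) :
    ∑ k ∈ range (2 * n), f k = ∑ k ∈ range n, (f (2 * k) + f (2 * k + 1)) := by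
  induction n with
  | zero => simp
  | succ n ih => rw [Nat.mul_succ, sum_range_succ, sum_range_succ, ih, sum_range_succ, add_assoc]

lemma rpow_natCast_div_two_sq {a : ℝ} (ha : 0 ≤ a) (n : ℕ) : (a ^ ((n : ℝ) / 2)) ^ 2 = a ^ n := by
  rw [← Real.rpow_mul_natCast ha, Nat.cast_ofNat, div_mul_cancel₀ _ two_ne_zero, Real.rpow_natCast]

section QuadraticVariation

variable (x : ℝ → ℝ)

lemma dyadicVar_nonneg (p : ℝ) (n : ℕ) : 0 ≤ dyadicVar x p n :=
  sum_nonneg fun _ _ => Real.rpow_nonneg (abs_nonneg _) p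

lemma dyadicVar_two (n : ℕ) :
    dyadicVar x 2 n =
      ∑ k ∈ range (2 ^ n), (x (((k : ℝ) + 1) / 2 ^ n) - x ((k : ℝ) / 2 ^ n)) ^ 2 := by
  simp only [dyadicVar, Real.rpow_two, sq_abs]

lemma dyadicVar_succ (p : ℝ) (n : ℕ) :
    dyadicVar x p (n + 1) =
      ∑ k ∈ range (2 ^ n),
        (|x ((2 * (k : ℝ) + 1) / 2 ^ (n + 1)) - x ((k : ℝ) / 2 ^ n)| ^ p +
          |x (((k : ℝ) + 1) / 2 ^ n) - x ((2 * (k : ℝ) + 1) / 2 ^ (n + 1))| ^ p) := by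
  have left_end (k : ℝ) : 2 * k / 2 ^ (n + 1) = k / 2 ^ n := by
    rw [pow_succ', mul_div_mul_left _ _ two_ne_zero]
  have right_end (k : ℝ) : (2 * k + 1 + 1) / 2 ^ (n + 1) = (k + 1) / 2 ^ n := by
    rw [← left_end]; ring
  rw [dyadicVar, pow_succ', sum_range_two_mul]
  push_cast
  simp only [left_end, right_end]

lemma fsCoeff_sq (m k : ℕ) :
    fsCoeff x m k ^ 2 = 2 ^ m *
      (2 * x ((2 * (k : ℝ) + 1) / 2 ^ (m + 1)) - x ((k : ℝ) / 2 ^ m)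
        - x (((k : ℝ) + 1) / 2 ^ m)) ^ 2 := by
  rw [fsCoeff, mul_pow, rpow_natCast_div_two_sq zero_le_two]

lemma two_pow_succ_mul_dyadicVar_two (n : ℕ) :
    2 ^ (n + 1) * dyadicVar x 2 (n + 1) =
      2 ^ n * dyadicVar x 2 n + ∑ k ∈ range (2 ^ n), fsCoeff x n k ^ 2 := by
  -- With half-increments `a` and `b`: `2 * (a ^ 2 + b ^ 2) = (a + b) ^ 2 + (a - b) ^ 2`.
  simp only [dyadicVar_succ, dyadicVar_two, fsCoeff_sq, Real.rpow_two, sq_abs, mul_sum,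
    ← sum_add_distrib]
  refine sum_congr rfl fun k _ => ?_
  ring

lemma sSeq_nonneg (n : ℕ) : 0 ≤ sSeq x n := Real.sqrt_nonneg _

lemma sSeq_sq (n : ℕ) :
    sSeq x n ^ 2 = ∑ m ∈ range n, ∑ k ∈ range (2 ^ m), fsCoeff x m k ^ 2 :=
  Real.sq_sqrt (sum_nonneg fun _ _ => sum_nonneg fun _ _ => sq_nonneg _)

theorem two_pow_mul_dyadicVar_two (n : ℕ) :
    2 ^ n * dyadicVar x 2 n = dyadicVar x 2 0 + sSeq x n ^ 2 := by
  rw [sSeq_sq]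
  induction n with
  | zero => simp
  | succ n ih => rw [two_pow_succ_mul_dyadicVar_two, ih, sum_range_succ, add_assoc]

end QuadraticVariation

section GrowthExponent

variable {x : ℝ → ℝ} {n : ℕ} {a : ℝ}

lemma two_rpow_mul_le_sSeq_of_le_xiSeq (ha : 0 < a) (h : a ≤ xiSeq x n) :
    2 ^ (a * n) ≤ sSeq x n := by
  have hlog : 0 < Real.logb 2 (sSeq x n) / n := ha.trans_le h
  have hn : (0 : ℝ) < n := n.cast_nonneg.lt_of_ne' (div_ne_zero_iff.1 hlog.ne').2
  -- `logb 2 0 = 0`, so a positive `ξ_n` excludes `s_n = 0`.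
  have hs : 0 < sSeq x n := (sSeq_nonneg x n).lt_of_ne' fun h0 => by
    simp [h0] at hlog
  rwa [← Real.le_logb_iff_rpow_le one_lt_two hs, ← le_div_iff₀ hn]

lemma sSeq_le_two_rpow_mul_of_xiSeq_le (h : xiSeq x n ≤ a) : sSeq x n ≤ 2 ^ (a * n) := by
  rcases (sSeq_nonneg x n).eq_or_lt with h0 | hs
  · rw [← h0]
    positivity
  have hn : (0 : ℝ) < n := by
    refine Nat.cast_pos.2 (Nat.pos_of_ne_zero ?_)
    rintro rfl
    simp [sSeq] at hs
  rwa [← Real.logb_le_iff_le_rpow one_lt_two hs, ← div_le_iff₀ hn]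

lemma one_le_dyadicVar_two_of_half_le_xiSeq (h : 1 / 2 ≤ xiSeq x n) :
    1 ≤ dyadicVar x 2 n := by
  have hs : (2 : ℝ) ^ ((n : ℝ) / 2) ≤ sSeq x n := by
    simpa only [one_div_mul_eq_div] using two_rpow_mul_le_sSeq_of_le_xiSeq one_half_pos h
  refine le_of_mul_le_mul_left ?_ (pow_pos two_pos n)
  calc (2 : ℝ) ^ n * 1 = (2 ^ ((n : ℝ) / 2)) ^ 2 := by
        rw [rpow_natCast_div_two_sq zero_le_two, mul_one]
    _ ≤ sSeq x n ^ 2 := by gcongr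
    _ ≤ dyadicVar x 2 0 + sSeq x n ^ 2 := le_add_of_nonneg_left (dyadicVar_nonneg x 2 0)
    _ = 2 ^ n * dyadicVar x 2 n := (two_pow_mul_dyadicVar_two x n).symm

lemma dyadicVar_two_le_of_xiSeq_le_half (h : xiSeq x n ≤ 1 / 2) :
    dyadicVar x 2 n ≤ dyadicVar x 2 0 + 1 := by
  have hs : sSeq x n ≤ 2 ^ ((n : ℝ) / 2) := by
    simpa only [one_div_mul_eq_div] using sSeq_le_two_rpow_mul_of_xiSeq_le h
  have hV := dyadicVar_nonneg x 2 0
  refine le_of_mul_le_mul_left ?_ (pow_pos two_pos n)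
  calc (2 : ℝ) ^ n * dyadicVar x 2 n = dyadicVar x 2 0 + sSeq x n ^ 2 :=
        two_pow_mul_dyadicVar_two x n
    _ ≤ dyadicVar x 2 0 + (2 ^ ((n : ℝ) / 2)) ^ 2 := by
        gcongr
        exact sSeq_nonneg x n
    _ = dyadicVar x 2 0 + 2 ^ n := by rw [rpow_natCast_div_two_sq zero_le_two]
    _ ≤ 2 ^ n * dyadicVar x 2 0 + 2 ^ n := by
        gcongr
        exact le_mul_of_one_le_left hV (one_le_pow₀ one_le_two)
    _ = 2 ^ n * (dyadicVar x 2 0 + 1) := by ring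

end GrowthExponent

namespace HasHurstExponent

variable {x : ℝ → ℝ} {H p c : ℝ}

lemma le_one_div_of_frequently_le_dyadicVar (hH : HasHurstExponent x H) (hp : 0 < p) (hc : 0 < c)
    (h : ∃ᶠ n in atTop, c ≤ dyadicVar x p n) : H ≤ 1 / p := by
  obtain ⟨hH₀, -, hzero, -⟩ := hH
  by_contra! hlt
  have hV := hzero p ((one_div_lt hp hH₀).1 hlt)
  exact h ((hV.eventually_lt_const hc).mono fun _ => not_le.2)

lemma one_div_le_of_frequently_dyadicVar_le (hH : HasHurstExponent x H) (hp : 0 < p)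
    (h : ∃ᶠ n in atTop, dyadicVar x p n ≤ c) : 1 / p ≤ H := by
  obtain ⟨hH₀, -, -, hinf⟩ := hH
  by_contra! hlt
  have hV := hinf p hp ((lt_one_div hH₀ hp).1 hlt)
  exact h ((hV.eventually_gt_atTop c).mono fun _ => not_le.2)

end HasHurstExponent

theorem stmt5_general {x : ℝ → ℝ} {H : ℝ} (hH : HasHurstExponent x H) :
    ((∃ᶠ n in atTop, 1 / 2 ≤ xiSeq x n) → H ≤ 1 / 2) ∧
      ((∃ᶠ n in atTop, xiSeq x n ≤ 1 / 2) → 1 / 2 ≤ H) :=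
  ⟨fun h => hH.le_one_div_of_frequently_le_dyadicVar two_pos one_pos
      (h.mono fun _ => one_le_dyadicVar_two_of_half_le_xiSeq),
    fun h => hH.one_div_le_of_frequently_dyadicVar_le two_pos
      (h.mono fun _ => dyadicVar_two_le_of_xiSeq_le_half)⟩

theorem stmt5 (x : ℝ → ℝ) (hx : ContinuousOn x (Set.Icc 0 1)) (hnc : Nonconstant x)
    (H ξ : ℝ) (hH : HasHurstExponent x H) (hξ : Tendsto (xiSeq x) atTop (nhds ξ)) :
    (1 / 2 < ξ → H ≤ 1 / 2) ∧ (ξ < 1 / 2 → 1 / 2 ≤ H) := by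
  obtain ⟨hle, hge⟩ := stmt5_general hH
  exact ⟨fun h => hle (hξ.eventually_const_le h).frequently,
    fun h => hge (hξ.eventually_le_const h).frequently⟩
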